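/- Consider the IQN setup and iteration, and assume additionally x^t ≠ x* for all t. There exist positive constants ε and δ such that: if ‖x⁰ − x*‖ < ε and ‖B_i⁰ − ∇²f_i(x*)‖_{M_i} < δ for M_i = ∇²f_i(x*)^{−1/2} and every i = 1,…,n, then the residual sequence is mean-superlinearly convergent: lim_{t→∞} ‖x^t − x*‖ / [ (1/n)(‖x^{t−1} − x*‖ + ‖x^{t−2} − x*‖ + … + ‖x^{t−n} − x*‖) ] = 0 (the limit taken over t ≥ n). -/

import Mathlib

open Matrix Filter RealInnerProductSpace

noncomputable section

abbrev Vec (p : ℕ) := EuclideanSpace ℝ (Fin p)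
abbrev Mat (p : ℕ) := Matrix (Fin p) (Fin p) ℝ

/-- A matrix acting on Euclidean space as a linear map. -/
def applyM {p : ℕ} (A : Mat p) (v : Vec p) : Vec p := Matrix.toEuclideanCLM (𝕜 := ℝ) A v

/-- Operator norm of a matrix induced by the Euclidean vector norm. -/
def opNorm {p : ℕ} (A : Mat p) : ℝ := ‖Matrix.toEuclideanCLM (𝕜 := ℝ) A‖

/-- Frobenius norm of a matrix. -/
def frobNorm {p : ℕ} (A : Mat p) : ℝ := Real.sqrt (∑ i, ∑ j, (A i j)^2)

/-- Weighted matrix norm ‖A‖_M = ‖M A M‖_F. -/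
def wNorm {p : ℕ} (M A : Mat p) : ℝ := frobNorm (M * A * M)

/-- Underlying function of a Euclidean vector. -/
def toFn {p : ℕ} (v : Vec p) : Fin p → ℝ := (WithLp.equiv 2 (Fin p → ℝ)) v

/-- Outer product a bᵀ. -/
def outer {p : ℕ} (a b : Vec p) : Mat p := Matrix.vecMulVec (toFn a) (toFn b)

/-- Bilinear form uᵀ B v. -/
def quadForm {p : ℕ} (B : Mat p) (u v : Vec p) : ℝ := toFn u ⬝ᵥ B.mulVec (toFn v)

/-- Dot product aᵀ b. -/
def dotV {p : ℕ} (a b : Vec p) : ℝ := toFn a ⬝ᵥ toFn b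

/-- The BFGS update  B⁺ = B + yyᵀ/(yᵀs) − B s sᵀ B/(sᵀ B s). -/
def bfgsUpdate {p : ℕ} (B : Mat p) (s y : Vec p) : Mat p :=
  B + (dotV y s)⁻¹ • outer y y - (quadForm B s s)⁻¹ • (B * outer s s * B)

/-- `H` is the Hessian (matrix of second derivatives) of `g`. -/
def HasHessian {p : ℕ} (g : Vec p → ℝ) (H : Vec p → Mat p) : Prop :=
  ∀ x, HasFDerivAt (gradient g) (Matrix.toEuclideanCLM (𝕜 := ℝ) (H x) : Vec p →L[ℝ] Vec p) x

/-- The cyclic index `i_t = (t mod n) + 1` (0-indexed: `t mod n`). -/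
def cyc {n : ℕ} (hn : 1 ≤ n) (t : ℕ) : Fin n := ⟨t % n, Nat.mod_lt t hn⟩

/-- The IQN problem data: `n` twice continuously differentiable sample functions
`f i : ℝ^p → ℝ`, `μ`-strongly convex with `L`-Lipschitz gradients and `L̃`-Lipschitz
Hessians, and the optimizer `x*` of `f = (1/n) Σ f i`. -/
structure IQNProblem (p n : ℕ) where
  hp : 1 ≤ p
  hn : 1 ≤ n
  f : Fin n → Vec p → ℝ
  Hess : Fin n → Vec p → Mat p
  mu : ℝ
  Lg : ℝ
  Ltil : ℝ
  xstar : Vec p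
  hmu : 0 < mu
  hmuL : mu ≤ Lg
  hLtil : 0 < Ltil
  hC2 : ∀ i, ContDiff ℝ 2 (f i)
  hHess : ∀ i, HasHessian (f i) (Hess i)
  hlow : ∀ i, ∀ x xh : Vec p,
    mu * ‖x - xh‖^2 ≤ ⟪gradient (f i) x - gradient (f i) xh, x - xh⟫
  hup : ∀ i, ∀ x xh : Vec p,
    ⟪gradient (f i) x - gradient (f i) xh, x - xh⟫ ≤ Lg * ‖x - xh‖^2
  hLip : ∀ i, ∀ u v : Vec p, opNorm (Hess i u - Hess i v) ≤ Ltil * ‖u - v‖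
  hopt : gradient (fun x => (n : ℝ)⁻¹ * ∑ i, f i x) xstar = 0
  hmin : ∀ x : Vec p, (n : ℝ)⁻¹ * ∑ i, f i xstar ≤ (n : ℝ)⁻¹ * ∑ i, f i x

/-- A run of the IQN iteration: sequences `x^t`, `z_i^t` and symmetric matrices `B_i^t`
following the IQN update with cyclic index, all steps assumed well defined. -/
structure IQNState {p n : ℕ} (P : IQNProblem p n) where
  x : ℕ → Vec p
  z : Fin n → ℕ → Vec p
  B : Fin n → ℕ → Mat p
  hz0 : ∀ i, z i 0 = x 0
  hsym : ∀ i t, (B i t).IsSymm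
  hinv : ∀ t, IsUnit ((n : ℝ)⁻¹ • ∑ i, B i t)
  hx : ∀ t, x (t+1) = applyM ((n : ℝ)⁻¹ • ∑ i, B i t)⁻¹
      ((n : ℝ)⁻¹ • ∑ i, applyM (B i t) (z i t) - (n : ℝ)⁻¹ • ∑ i, gradient (P.f i) (z i t))
  hzupd : ∀ t, z (cyc P.hn t) (t+1) = x (t+1)
  hzfix : ∀ t, ∀ j, j ≠ cyc P.hn t → z j (t+1) = z j t
  hs : ∀ t, z (cyc P.hn t) (t+1) - z (cyc P.hn t) t ≠ 0
  hys : ∀ t, dotV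
      (gradient (P.f (cyc P.hn t)) (z (cyc P.hn t) (t+1)) -
        gradient (P.f (cyc P.hn t)) (z (cyc P.hn t) t))
      (z (cyc P.hn t) (t+1) - z (cyc P.hn t) t) ≠ 0
  hsBs : ∀ t, quadForm (B (cyc P.hn t) t)
      (z (cyc P.hn t) (t+1) - z (cyc P.hn t) t)
      (z (cyc P.hn t) (t+1) - z (cyc P.hn t) t) ≠ 0
  hBupd : ∀ t, B (cyc P.hn t) (t+1) = bfgsUpdate (B (cyc P.hn t) t)
      (z (cyc P.hn t) (t+1) - z (cyc P.hn t) t)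
      (gradient (P.f (cyc P.hn t)) (z (cyc P.hn t) (t+1)) -
        gradient (P.f (cyc P.hn t)) (z (cyc P.hn t) t))
  hBfix : ∀ t, ∀ j, j ≠ cyc P.hn t → B j (t+1) = B j t

/-!
A BFGS update with an exact secant pair `y = H s` does not increase the weighted Frobenius distance
from `B` to `H`, and the decrease of its square controls the relative error `‖(B - H) s‖ / ‖s‖`.
Along a run of IQN the pair is exact up to an error proportional to the distance of the iterates to
`x*`. Near `x*` this closes a bootstrap: as long as the matrices stay close to the Hessians the
residuals decay at least as a geometric sequence `ε r ^ t`, so the secant errors are summable and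
the matrices do stay close. Telescoping, the relative errors are square summable, hence tend to `0`
(the Dennis–Moré condition).

The relative error available at time `t` for index `i` involves the step at the *next* update of
`i`, that is, a residual from the future. Passing to suprema of tails of the residual sequence
absorbs it: the supremum from `t + n` on is at most `κ` times that from `t` on plus half of itself.
-/

open scoped NNReal

section MatrixAction

variable {p : ℕ}

lemma applyM_one (v : Vec p) : applyM 1 v = v := by
  simp [applyM]

lemma applyM_mul (A B : Mat p) (v : Vec p) : applyM (A * B) v = applyM A (applyM B v) := by
  simp [applyM]

lemma applyM_sub (A : Mat p) (v w : Vec p) : applyM A (v - w) = applyM A v - applyM A w :=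
  map_sub _ v w

lemma applyM_smul (A : Mat p) (c : ℝ) (v : Vec p) : applyM A (c • v) = c • applyM A v :=
  map_smul _ c v

lemma sub_applyM (A B : Mat p) (v : Vec p) : applyM (A - B) v = applyM A v - applyM B v := by
  simp [applyM]

lemma smul_applyM (c : ℝ) (A : Mat p) (v : Vec p) : applyM (c • A) v = c • applyM A v := by
  simp [applyM]

lemma sum_applyM {ι : Type*} (s : Finset ι) (A : ι → Mat p) (v : Vec p) :
    applyM (∑ i ∈ s, A i) v = ∑ i ∈ s, applyM (A i) v := by
  simp [applyM]

lemma norm_applyM_le {A : Mat p} {K : ℝ} (hA : opNorm A ≤ K) (v : Vec p) :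
    ‖applyM A v‖ ≤ K * ‖v‖ :=
  ContinuousLinearMap.le_of_opNorm_le _ hA v

lemma dotV_eq_inner (a b : Vec p) : dotV a b = ⟪a, b⟫ := by
  rw [real_inner_comm]
  simp [dotV, toFn, EuclideanSpace.inner_eq_star_dotProduct]

lemma quadForm_eq_inner (B : Mat p) (u v : Vec p) : quadForm B u v = ⟪u, applyM B v⟫ :=
  dotV_eq_inner u (applyM B v)

lemma inner_applyM_eq_inner_transpose_applyM (A : Mat p) (u v : Vec p) :
    ⟪u, applyM A v⟫ = ⟪applyM Aᵀ u, v⟫ := by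
  simp only [← dotV_eq_inner]
  exact (dotProduct_mulVec _ _ _).trans (congrArg (· ⬝ᵥ toFn v) (mulVec_transpose _ _).symm)

lemma inner_applyM_comm {A : Mat p} (hA : A.IsSymm) (u v : Vec p) :
    ⟪u, applyM A v⟫ = ⟪applyM A u, v⟫ := by
  rw [inner_applyM_eq_inner_transpose_applyM, hA.eq]

lemma mul_outer_mul (A B : Mat p) (u v : Vec p) :
    A * outer u v * B = outer (applyM A u) (applyM Bᵀ v) :=
  (congrArg (· * B) (mul_vecMulVec _ _ _)).trans <| (vecMulVec_mul _ _ _).trans <|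
    congrArg (vecMulVec _) (mulVec_transpose _ _).symm

lemma mul_outer_mul_of_isSymm {A : Mat p} (hA : A.IsSymm) (u v : Vec p) :
    A * outer u v * A = outer (applyM A u) (applyM A v) := by
  rw [mul_outer_mul, hA.eq]

lemma outer_add_right (a b c : Vec p) : outer a (b + c) = outer a b + outer a c :=
  vecMulVec_add _ _ _

lemma outer_add_left (a b c : Vec p) : outer (a + b) c = outer a c + outer b c :=
  add_vecMulVec _ _ _

end MatrixAction

section Frobenius

/-- The inner product `tr (Aᵀ B)` on real matrices, whose norm is the Frobenius norm. -/
abbrev frobeniusInnerProductSpace {m n : Type*} [Fintype m] [Fintype n] :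
    letI := Matrix.frobeniusNormedAddCommGroup (m := m) (n := n) (α := ℝ)
    InnerProductSpace ℝ (Matrix m n ℝ) :=
  letI := Matrix.frobeniusNormedAddCommGroup (m := m) (n := n) (α := ℝ)
  { Matrix.frobeniusNormedSpace with
    inner A B := ∑ i, ∑ j, A i j * B i j
    norm_sq_eq_re_inner A := by
      have hsum : 0 ≤ ∑ i, ∑ j, ‖A i j‖ ^ (2 : ℝ) := by positivity
      rw [Matrix.frobenius_norm_def, ← Real.sqrt_eq_rpow, Real.sq_sqrt hsum]
      simp [pow_two]
    conj_inner_symm A B := by simp [mul_comm]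
    add_left A B C := by simp [add_mul, Finset.sum_add_distrib]
    smul_left A B c := by simp [Finset.mul_sum, mul_assoc] }

attribute [local instance] Matrix.frobeniusNormedAddCommGroup frobeniusInnerProductSpace

variable {p : ℕ}

lemma frobNorm_eq_norm (A : Mat p) : frobNorm A = ‖A‖ := by
  rw [frobNorm, Matrix.frobenius_norm_def, ← Real.sqrt_eq_rpow]
  simp

lemma inner_outer (A : Mat p) (u v : Vec p) : ⟪A, outer u v⟫ = ⟪u, applyM A v⟫ := by
  rw [← dotV_eq_inner]
  change ∑ i, ∑ j, A i j * (toFn u i * toFn v j) = ∑ i, toFn u i * ∑ j, A i j * toFn v j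
  simp only [Finset.mul_sum, mul_left_comm]

lemma applyM_outer (a b v : Vec p) : applyM (outer a b) v = ⟪b, v⟫ • a := by
  rw [← dotV_eq_inner]
  ext i
  change (vecMulVec (toFn a) (toFn b) *ᵥ toFn v) i = (toFn b ⬝ᵥ toFn v) * toFn a i
  rw [vecMulVec_mulVec]
  simp [mul_comm]

lemma inner_outer_outer (a b u v : Vec p) : ⟪outer a b, outer u v⟫ = ⟪u, a⟫ * ⟪b, v⟫ := by
  rw [inner_outer, applyM_outer, inner_smul_right, mul_comm]

lemma norm_outer (a b : Vec p) : ‖outer a b‖ = ‖a‖ * ‖b‖ := by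
  rw [← sq_eq_sq₀ (norm_nonneg _) (by positivity), ← real_inner_self_eq_norm_sq,
    inner_outer_outer, real_inner_self_eq_norm_sq, real_inner_self_eq_norm_sq, mul_pow]

lemma abs_inner_applyM_le (A : Mat p) (u v : Vec p) :
    |⟪u, applyM A v⟫| ≤ ‖A‖ * (‖u‖ * ‖v‖) := by
  rw [← inner_outer, ← norm_outer]
  exact abs_real_inner_le_norm A (outer u v)

lemma norm_applyM_le_frobenius (A : Mat p) (v : Vec p) : ‖applyM A v‖ ≤ ‖A‖ * ‖v‖ := by
  have h : ‖applyM A v‖ * ‖applyM A v‖ ≤ ‖A‖ * ‖v‖ * ‖applyM A v‖ := by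
    rw [← real_inner_self_eq_norm_mul_norm]
    refine ((le_abs_self _).trans (abs_inner_applyM_le A _ v)).trans_eq ?_
    ring
  by_contra! hlt
  exact absurd h (mul_lt_mul_of_pos_right hlt ((by positivity : 0 ≤ ‖A‖ * ‖v‖).trans_lt hlt)).not_ge

section BFGS

variable {B : Mat p} {s y : Vec p}

lemma bfgsUpdate_eq (hB : B.IsSymm) (s y : Vec p) :
    bfgsUpdate B s y = B + ⟪y, s⟫⁻¹ • outer y y -
      ⟪s, applyM B s⟫⁻¹ • outer (applyM B s) (applyM B s) := by
  rw [bfgsUpdate, mul_outer_mul_of_isSymm hB, dotV_eq_inner, quadForm_eq_inner]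

lemma norm_bfgsUpdate_self_sub_one_sq (hB : B.IsSymm) (hs : s ≠ 0)
    (hβ : ⟪s, applyM B s⟫ ≠ 0) :
    ‖bfgsUpdate B s s - 1‖ ^ 2 = ‖B - 1‖ ^ 2
      - (1 - ‖applyM B s‖ ^ 2 / ⟪s, applyM B s⟫) ^ 2
      - 2 * (⟪applyM B s, applyM B (applyM B s)⟫ / ⟪s, applyM B s⟫
          - (‖applyM B s‖ ^ 2 / ⟪s, applyM B s⟫) ^ 2) := by
  have hσ : ‖s‖ ≠ 0 := norm_ne_zero_iff.2 hs
  have hsplit : bfgsUpdate B s s - 1 = (B - 1) + ((‖s‖ ^ 2)⁻¹ • outer s s -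
      ⟪s, applyM B s⟫⁻¹ • outer (applyM B s) (applyM B s)) := by
    rw [bfgsUpdate_eq hB, real_inner_self_eq_norm_sq]
    abel
  have hcomm : ⟪applyM B s, s⟫ = ⟪s, applyM B s⟫ := real_inner_comm _ _
  rw [hsplit, norm_add_sq_real, norm_sub_sq_real (_ • _)]
  simp only [inner_sub_right, real_inner_smul_left, real_inner_smul_right, inner_outer,
    applyM_outer, sub_applyM, applyM_one, norm_smul, norm_outer, mul_pow, Real.norm_eq_abs,
    sq_abs, real_inner_self_eq_norm_sq, hcomm]
  field_simp
  ring

lemma inner_applyM_mem_Icc_of_norm_sub_one_le (hV : ‖B - 1‖ ≤ 1 / 2) (v : Vec p) :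
    ⟪v, applyM B v⟫ ∈ Set.Icc (1 / 2 * ‖v‖ ^ 2) (3 / 2 * ‖v‖ ^ 2) := by
  have h := (abs_inner_applyM_le (B - 1) v v).trans
    (mul_le_mul_of_nonneg_right hV (by positivity))
  rw [sub_applyM, applyM_one, inner_sub_right, real_inner_self_eq_norm_sq, ← pow_two] at h
  constructor <;> linarith [abs_le.1 h]

/-- The ratio `⟪u, B u⟫ / β - a ^ 2` is the energy of the part of `u` not along `s`. -/
lemma norm_sub_one_applyM_sq_le (hB : B.IsSymm) (hs : s ≠ 0) (hV : ‖B - 1‖ ≤ 1 / 2) :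
    ‖applyM (B - 1) s‖ ^ 2 ≤ 3 * ‖s‖ ^ 2 *
      ((1 - ‖applyM B s‖ ^ 2 / ⟪s, applyM B s⟫) ^ 2
      + 2 * (⟪applyM B s, applyM B (applyM B s)⟫ / ⟪s, applyM B s⟫
          - (‖applyM B s‖ ^ 2 / ⟪s, applyM B s⟫) ^ 2)) := by
  have hσ : 0 < ‖s‖ ^ 2 := by positivity
  obtain ⟨hβσ, hσβ⟩ := inner_applyM_mem_Icc_of_norm_sub_one_le hV s
  have hβ : 0 < ⟪s, applyM B s⟫ := by linarith
  set u := applyM B s with hu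
  set β := ⟪s, u⟫
  set a := ‖u‖ ^ 2 / β with ha
  set b := ⟪u, applyM B u⟫ / β with hb
  have hsBu : ⟪s, applyM B u⟫ = ‖u‖ ^ 2 := by
    rw [inner_applyM_comm hB, real_inner_self_eq_norm_sq]
  have henergy : ⟪u - a • s, applyM B (u - a • s)⟫ = β * (b - a ^ 2) := by
    simp only [applyM_sub, applyM_smul, inner_sub_left, inner_sub_right, real_inner_smul_left,
      real_inner_smul_right, ← hu, hsBu, real_inner_self_eq_norm_sq]
    rw [ha, hb]
    field_simp
    ring
  have hlow : ‖u - a • s‖ ^ 2 ≤ 3 * ‖s‖ ^ 2 * (b - a ^ 2) := by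
    have h := (inner_applyM_mem_Icc_of_norm_sub_one_le hV (u - a • s)).1
    rw [henergy] at h
    have hba : 0 ≤ b - a ^ 2 := nonneg_of_mul_nonneg_right (h.trans' (by positivity)) hβ
    linarith [mul_le_mul_of_nonneg_right hσβ hba]
  have htri : ‖u - s‖ ^ 2 ≤ 2 * (‖u - a • s‖ ^ 2 + (1 - a) ^ 2 * ‖s‖ ^ 2) := by
    calc ‖u - s‖ ^ 2 = ‖(u - a • s) + (a - 1) • s‖ ^ 2 := by congr 2; module
      _ ≤ (‖u - a • s‖ + ‖(a - 1) • s‖) ^ 2 := by gcongr; exact norm_add_le _ _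
      _ ≤ 2 * (‖u - a • s‖ ^ 2 + ‖(a - 1) • s‖ ^ 2) := add_sq_le
      _ = 2 * (‖u - a • s‖ ^ 2 + (1 - a) ^ 2 * ‖s‖ ^ 2) := by
        rw [norm_smul, mul_pow, Real.norm_eq_abs, sq_abs]; ring
  rw [sub_applyM, applyM_one, ← hu]
  nlinarith [mul_nonneg (sq_nonneg (1 - a)) hσ.le]

lemma norm_bfgsUpdate_self_sub_one_sq_le (hB : B.IsSymm) (hs : s ≠ 0) (hV : ‖B - 1‖ ≤ 1 / 2) :
    ‖bfgsUpdate B s s - 1‖ ^ 2 ≤ ‖B - 1‖ ^ 2 - (‖applyM (B - 1) s‖ / ‖s‖) ^ 2 / 3 := by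
  have hσ : 0 < ‖s‖ ^ 2 := by positivity
  have hβ := (inner_applyM_mem_Icc_of_norm_sub_one_le hV s).1
  rw [norm_bfgsUpdate_self_sub_one_sq hB hs (by nlinarith), sub_sub, div_pow ‖applyM (B - 1) s‖]
  gcongr
  rw [div_div, div_le_iff₀ (by positivity)]
  exact (norm_sub_one_applyM_sq_le hB hs hV).trans_eq (by ring)

lemma norm_smul_outer_sub_smul_outer_le {η : ℝ} (hs : s ≠ 0) (hη : η ≤ 1 / 2)
    (hy : ‖y - s‖ ≤ η * ‖s‖) :
    ‖⟪y, s⟫⁻¹ • outer y y - ⟪s, s⟫⁻¹ • outer s s‖ ≤ 7 * η := by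
  have hs0 : 0 < ‖s‖ := norm_pos_iff.2 hs
  have hη0 : 0 ≤ η := nonneg_of_mul_nonneg_left ((norm_nonneg _).trans hy) hs0
  obtain ⟨e, rfl⟩ : ∃ e, y = s + e := ⟨y - s, by simp⟩
  rw [add_sub_cancel_left] at hy
  have hes : |⟪e, s⟫| ≤ η * ‖s‖ ^ 2 := by
    refine (abs_real_inner_le_norm e s).trans ?_
    nlinarith
  set τ := ⟪s + e, s⟫ with hτ
  have hτe : τ = ‖s‖ ^ 2 + ⟪e, s⟫ := by rw [hτ, inner_add_left, real_inner_self_eq_norm_sq]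
  have hτs : ‖s‖ ^ 2 / 2 ≤ τ := by nlinarith [abs_le.1 hes]
  have hτ0 : 0 < τ := lt_of_lt_of_le (by positivity) hτs
  have hy' : ‖s + e‖ ≤ 3 / 2 * ‖s‖ := (norm_add_le _ _).trans (by nlinarith)
  have hsplit : τ⁻¹ • outer (s + e) (s + e) - ⟪s, s⟫⁻¹ • outer s s =
      τ⁻¹ • (outer (s + e) e + outer e s - (⟪e, s⟫ / ‖s‖ ^ 2) • outer s s) := by
    rw [real_inner_self_eq_norm_sq, outer_add_right (s + e) s e, outer_add_left s e s,
      show ⟪e, s⟫ / ‖s‖ ^ 2 = τ / ‖s‖ ^ 2 - 1 by rw [hτe]; field_simp; ring, smul_sub, smul_smul,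
      show τ⁻¹ * (τ / ‖s‖ ^ 2 - 1) = (‖s‖ ^ 2)⁻¹ - τ⁻¹ by field_simp]
    module
  have hbound : ‖outer (s + e) e + outer e s - (⟪e, s⟫ / ‖s‖ ^ 2) • outer s s‖ ≤
      7 / 2 * η * ‖s‖ ^ 2 := by
    calc _ ≤ ‖s + e‖ * ‖e‖ + ‖e‖ * ‖s‖ + |⟪e, s⟫| := by
          refine (norm_sub_le _ _).trans (add_le_add ((norm_add_le _ _).trans_eq ?_) (le_of_eq ?_))
          · rw [norm_outer, norm_outer]
          · rw [norm_smul, norm_outer, norm_div, norm_pow, norm_norm, Real.norm_eq_abs]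
            field_simp
      _ ≤ (3 / 2 * ‖s‖) * (η * ‖s‖) + (η * ‖s‖) * ‖s‖ + η * ‖s‖ ^ 2 := by gcongr
      _ = 7 / 2 * η * ‖s‖ ^ 2 := by ring
  rw [hsplit, norm_smul, norm_inv, Real.norm_of_nonneg hτ0.le, inv_mul_le_iff₀ hτ0]
  nlinarith

lemma norm_bfgsUpdate_sub_one_sq_le {η : ℝ} (hB : B.IsSymm) (hs : s ≠ 0) (hV : ‖B - 1‖ ≤ 1 / 2)
    (hη : η ≤ 1 / 2) (hy : ‖y - s‖ ≤ η * ‖s‖) :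
    ‖bfgsUpdate B s y - 1‖ ^ 2 ≤
      ‖B - 1‖ ^ 2 - (‖applyM (B - 1) s‖ / ‖s‖) ^ 2 / 3 + 32 * η := by
  set Q := ⟪y, s⟫⁻¹ • outer y y - ⟪s, s⟫⁻¹ • outer s s with hQ
  have hsplit : bfgsUpdate B s y - 1 = (bfgsUpdate B s s - 1) + Q := by
    rw [bfgsUpdate_eq hB, bfgsUpdate_eq hB, hQ]
    abel
  have hQη : ‖Q‖ ≤ 7 * η := norm_smul_outer_sub_smul_outer_le hs hη hy
  have hexact := norm_bfgsUpdate_self_sub_one_sq_le hB hs hV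
  have hratio : 0 ≤ (‖applyM (B - 1) s‖ / ‖s‖) ^ 2 / 3 := by positivity
  have hhalf : ‖bfgsUpdate B s s - 1‖ ≤ 1 / 2 :=
    ((pow_le_pow_iff_left₀ (norm_nonneg _) (norm_nonneg _) two_ne_zero).1 (by linarith)).trans hV
  calc ‖bfgsUpdate B s y - 1‖ ^ 2 ≤ (‖bfgsUpdate B s s - 1‖ + ‖Q‖) ^ 2 := by
        rw [hsplit]
        gcongr
        exact norm_add_le _ _
    _ = ‖bfgsUpdate B s s - 1‖ ^ 2 + (2 * ‖bfgsUpdate B s s - 1‖ + ‖Q‖) * ‖Q‖ := by ring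
    _ ≤ ‖bfgsUpdate B s s - 1‖ ^ 2 + (2 * (1 / 2) + 7 * (1 / 2)) * (7 * η) := by
        gcongr
        linarith
    _ ≤ ‖B - 1‖ ^ 2 - (‖applyM (B - 1) s‖ / ‖s‖) ^ 2 / 3 + 32 * η := by
        linarith [hQη.trans' (norm_nonneg Q)]

end BFGS

lemma mul_bfgsUpdate_mul {M : Mat p} (hM : M.IsSymm) (B : Mat p) (s y : Vec p) :
    M * bfgsUpdate B (applyM M s) y * M = bfgsUpdate (M * B * M) s (applyM M y) := by
  have hys : dotV y (applyM M s) = dotV (applyM M y) s := by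
    rw [dotV_eq_inner, dotV_eq_inner, inner_applyM_comm hM]
  have hsBs : quadForm B (applyM M s) (applyM M s) = quadForm (M * B * M) s s := by
    rw [quadForm_eq_inner, quadForm_eq_inner, applyM_mul, applyM_mul, inner_applyM_comm hM]
  rw [bfgsUpdate, bfgsUpdate, hys, hsBs, ← mul_outer_mul_of_isSymm hM, ← mul_outer_mul_of_isSymm hM]
  simp only [mul_add, mul_sub, add_mul, sub_mul, Matrix.mul_smul, Matrix.smul_mul, mul_assoc]

/-- `M` is a symmetric matrix playing the role of `H ^ (-1 / 2)`, and `K` bounds its norm and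
that of its inverse: the weight in which a BFGS update is compared with its target `H`. -/
structure IsBoundedInvSqrt (M H : Mat p) (K : ℝ) : Prop where
  isSymm : M.IsSymm
  mul_mul_eq_one : M * H * M = 1
  opNorm_le : opNorm M ≤ K
  opNorm_inv_le : opNorm M⁻¹ ≤ K

namespace IsBoundedInvSqrt

variable {M H B : Mat p} {K : ℝ}

lemma isUnit_det (h : IsBoundedInvSqrt M H K) : IsUnit M.det :=
  isUnit_det_of_left_inverse h.mul_mul_eq_one

lemma nonneg (h : IsBoundedInvSqrt M H K) : 0 ≤ K :=
  (norm_nonneg _).trans h.opNorm_le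

lemma applyM_applyM_inv (h : IsBoundedInvSqrt M H K) (v : Vec p) :
    applyM M (applyM M⁻¹ v) = v := by
  rw [← applyM_mul, mul_nonsing_inv M h.isUnit_det, applyM_one]

lemma norm_le_norm_applyM_inv (h : IsBoundedInvSqrt M H K) (v : Vec p) :
    ‖v‖ ≤ K * ‖applyM M⁻¹ v‖ := by
  simpa only [h.applyM_applyM_inv] using norm_applyM_le h.opNorm_le (applyM M⁻¹ v)

lemma mul_sub_mul (h : IsBoundedInvSqrt M H K) (B : Mat p) :
    M * (B - H) * M = M * B * M - 1 := by
  rw [mul_sub, sub_mul, h.mul_mul_eq_one]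

lemma wNorm_sub (h : IsBoundedInvSqrt M H K) (B : Mat p) :
    wNorm M (B - H) = ‖M * B * M - 1‖ := by
  rw [wNorm, frobNorm_eq_norm, h.mul_sub_mul]

lemma applyM_sub_eq (h : IsBoundedInvSqrt M H K) (B : Mat p) (v : Vec p) :
    applyM (B - H) v = applyM M⁻¹ (applyM (M * B * M - 1) (applyM M⁻¹ v)) := by
  rw [← h.mul_sub_mul, applyM_mul, h.applyM_applyM_inv, applyM_mul, ← applyM_mul M⁻¹ M,
    nonsing_inv_mul M h.isUnit_det, applyM_one]

lemma norm_applyM_sub_le {c : ℝ} (h : IsBoundedInvSqrt M H K) (hB : wNorm M (B - H) ≤ c)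
    (v : Vec p) : ‖applyM (B - H) v‖ ≤ K ^ 2 * c * ‖v‖ := by
  have hK := h.nonneg
  have hc : 0 ≤ c := (Real.sqrt_nonneg _).trans hB
  rw [h.wNorm_sub] at hB
  rw [h.applyM_sub_eq]
  calc _ ≤ K * ‖applyM (M * B * M - 1) (applyM M⁻¹ v)‖ := norm_applyM_le h.opNorm_inv_le _
    _ ≤ K * (‖M * B * M - 1‖ * ‖applyM M⁻¹ v‖) := by gcongr; exact norm_applyM_le_frobenius _ _
    _ ≤ K * (c * (K * ‖v‖)) := by gcongr; exact norm_applyM_le h.opNorm_inv_le v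
    _ = K ^ 2 * c * ‖v‖ := by ring

lemma norm_sq_le_inner_applyM (h : IsBoundedInvSqrt M H K) (hB : wNorm M (B - H) ≤ 1 / 2)
    (v : Vec p) : ‖v‖ ^ 2 ≤ 2 * K ^ 2 * ⟪v, applyM B v⟫ := by
  rw [h.wNorm_sub] at hB
  have hcongr : ⟪applyM M⁻¹ v, applyM (M * B * M) (applyM M⁻¹ v)⟫ = ⟪v, applyM B v⟫ := by
    rw [applyM_mul, applyM_mul, inner_applyM_comm h.isSymm, h.applyM_applyM_inv]
  have hlow := (inner_applyM_mem_Icc_of_norm_sub_one_le hB (applyM M⁻¹ v)).1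
  rw [hcongr] at hlow
  calc ‖v‖ ^ 2 ≤ (K * ‖applyM M⁻¹ v‖) ^ 2 := by gcongr; exact h.norm_le_norm_applyM_inv v
    _ = 2 * K ^ 2 * (1 / 2 * ‖applyM M⁻¹ v‖ ^ 2) := by ring
    _ ≤ 2 * K ^ 2 * ⟪v, applyM B v⟫ := by gcongr

lemma norm_applyM_sub_div_le (h : IsBoundedInvSqrt M H K) (B : Mat p) {s : Vec p} (hs : s ≠ 0) :
    ‖applyM (B - H) s‖ / ‖s‖ ≤
      K ^ 2 * (‖applyM (M * B * M - 1) (applyM M⁻¹ s)‖ / ‖applyM M⁻¹ s‖) := by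
  have hK := h.nonneg
  have hs0 : 0 < ‖s‖ := norm_pos_iff.2 hs
  have hMs0 : 0 < ‖applyM M⁻¹ s‖ :=
    pos_of_mul_pos_right (hs0.trans_le (h.norm_le_norm_applyM_inv s)) hK
  rw [h.applyM_sub_eq, mul_div_assoc', div_le_div_iff₀ hs0 hMs0, pow_two, mul_right_comm, mul_assoc]
  exact (mul_le_mul (norm_applyM_le h.opNorm_inv_le _) (norm_applyM_le h.opNorm_inv_le s)
    (norm_nonneg _) (by positivity)).trans_eq (by ring)

lemma wNorm_bfgsUpdate_sub_sq_le {s y : Vec p} {κ : ℝ} (h : IsBoundedInvSqrt M H K)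
    (hBsymm : B.IsSymm) (hB : wNorm M (B - H) ≤ 1 / 2) (hs : s ≠ 0) (hκ : K ^ 2 * κ ≤ 1 / 2)
    (hy : ‖y - applyM H s‖ ≤ κ * ‖s‖) :
    wNorm M (bfgsUpdate B s y - H) ^ 2 ≤
      wNorm M (B - H) ^ 2 - (‖applyM (B - H) s‖ / ‖s‖) ^ 2 / (3 * K ^ 4) + 32 * (K ^ 2 * κ) := by
  have hK := h.nonneg
  have hκ0 : 0 ≤ κ :=
    nonneg_of_mul_nonneg_left (hy.trans' (norm_nonneg _)) (norm_pos_iff.2 hs)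
  set s' := applyM M⁻¹ s with hs'
  have hMs' : applyM M s' = s := h.applyM_applyM_inv s
  have hs'0 : s' ≠ 0 := fun h0 => hs (by rw [← hMs', h0, applyM, map_zero])
  have hsecant : ‖applyM M y - s'‖ ≤ K ^ 2 * κ * ‖s'‖ := by
    have hHs : applyM M (applyM H s) = s' := by
      rw [← hMs', ← applyM_mul, ← applyM_mul, h.mul_mul_eq_one, applyM_one]
    calc ‖applyM M y - s'‖ = ‖applyM M (y - applyM H s)‖ := by rw [applyM_sub, hHs]
      _ ≤ K * ‖y - applyM H s‖ := norm_applyM_le h.opNorm_le _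
      _ ≤ K * (κ * (K * ‖s'‖)) := by
        gcongr
        exact hy.trans (by gcongr; exact h.norm_le_norm_applyM_inv s)
      _ = K ^ 2 * κ * ‖s'‖ := by ring
  have hsymm : (M * B * M).IsSymm := by
    rw [IsSymm, transpose_mul, transpose_mul, h.isSymm.eq, hBsymm.eq, mul_assoc]
  rw [h.wNorm_sub] at hB
  have hstep := norm_bfgsUpdate_sub_one_sq_le hsymm hs'0 hB hκ hsecant
  rw [← mul_bfgsUpdate_mul h.isSymm, hMs', ← h.wNorm_sub, ← h.wNorm_sub] at hstep
  refine hstep.trans ?_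
  gcongr ?_ - ?_ + _
  refine div_le_of_le_mul₀ (by positivity) (by positivity) ?_
  calc (‖applyM (B - H) s‖ / ‖s‖) ^ 2
      ≤ (K ^ 2 * (‖applyM (M * B * M - 1) s'‖ / ‖s'‖)) ^ 2 := by
        gcongr
        exact h.norm_applyM_sub_div_le B hs
    _ = _ := by ring

end IsBoundedInvSqrt

lemma exists_isBoundedInvSqrt {ι : Type*} [Finite ι] {M H : ι → Mat p}
    (hM : ∀ i, (M i).IsSymm) (hMH : ∀ i, M i * H i * M i = 1) :
    ∃ K, 1 ≤ K ∧ ∀ i, IsBoundedInvSqrt (M i) (H i) K := by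
  obtain ⟨K₁, hK₁⟩ := (Set.finite_range fun i => opNorm (M i)).bddAbove
  obtain ⟨K₂, hK₂⟩ := (Set.finite_range fun i => opNorm (M i)⁻¹).bddAbove
  refine ⟨max 1 (max K₁ K₂), le_max_left _ _, fun i => ⟨hM i, hMH i, ?_, ?_⟩⟩
  · exact (hK₁ ⟨i, rfl⟩).trans ((le_max_left _ _).trans (le_max_right _ _))
  · exact (hK₂ ⟨i, rfl⟩).trans ((le_max_right _ _).trans (le_max_right _ _))

end Frobenius

section TailSup

/-- The supremum of the terms of `e` from index `t` on, used to bound terms that are still to come;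
as a real supremum it is meaningful only for `e` bounded above. -/
def tailSup (e : ℕ → ℝ) (t : ℕ) : ℝ := ⨆ m, e (t + m)

variable {e : ℕ → ℝ}

lemma le_tailSup (he : BddAbove (Set.range e)) {t m : ℕ} (h : t ≤ m) : e m ≤ tailSup e t := by
  obtain ⟨k, rfl⟩ := Nat.exists_eq_add_of_le h
  exact le_ciSup (f := fun k => e (t + k)) (he.mono (Set.range_comp_subset_range (t + ·) e)) k

lemma tailSup_le {t : ℕ} {c : ℝ} (h : ∀ m ≥ t, e m ≤ c) : tailSup e t ≤ c :=
  ciSup_le fun m => h (t + m) (Nat.le_add_right t m)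

lemma tailSup_antitone (he : BddAbove (Set.range e)) : Antitone (tailSup e) :=
  fun _ _ h => tailSup_le fun _ hm => le_tailSup he (h.trans hm)

lemma tailSup_nonneg (he : BddAbove (Set.range e)) (he0 : ∀ t, 0 ≤ e t) (t : ℕ) :
    0 ≤ tailSup e t :=
  (he0 t).trans (le_tailSup he le_rfl)

lemma eventually_tailSup_le (he : Tendsto e atTop (nhds 0)) {c : ℝ} (hc : 0 < c) :
    ∀ᶠ t in atTop, tailSup e t ≤ c :=
  (eventually_forall_ge_atTop.2 (he.eventually_le_const hc)).mono fun _ h => tailSup_le h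

lemma tailSup_le_sum_range_add (he : BddAbove (Set.range e)) (he0 : ∀ t, 0 ≤ e t) (t n : ℕ) :
    tailSup e t ≤ ∑ j ∈ Finset.range n, e (t + j) + tailSup e (t + n) := by
  refine tailSup_le fun m hm => ?_
  obtain ⟨k, rfl⟩ := Nat.exists_eq_add_of_le hm
  rcases lt_or_ge k n with hk | hk
  · have hterm : e (t + k) ≤ ∑ j ∈ Finset.range n, e (t + j) :=
      Finset.single_le_sum (f := fun j => e (t + j)) (fun j _ => he0 _) (Finset.mem_range.2 hk)
    exact hterm.trans (le_add_of_nonneg_right (tailSup_nonneg he he0 _))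
  · exact (le_tailSup he (by lia)).trans
      (le_add_of_nonneg_left (Finset.sum_nonneg fun j _ => he0 _))

lemma tendsto_div_mean_of_le_tailSup {θ : ℝ} {n : ℕ} (he : BddAbove (Set.range e))
    (he0 : ∀ t, 0 ≤ e t) (hθ0 : 0 ≤ θ) (hθ : θ < 1)
    (h : ∀ κ > 0, ∀ᶠ t in atTop, e (t + n) ≤ κ * tailSup e t + θ * tailSup e (t + n)) :
    Tendsto (fun t => e (t + n) / ((n : ℝ)⁻¹ * ∑ j ∈ Finset.range n, e (t + j)))
      atTop (nhds 0) := by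
  suffices hlittle : (fun t => e (t + n)) =o[atTop] fun t => ∑ j ∈ Finset.range n, e (t + j) by
    have hdiv := hlittle.tendsto_div_nhds_zero.const_mul (n : ℝ)
    rw [mul_zero] at hdiv
    refine hdiv.congr fun t => ?_
    rw [div_mul_eq_div_div_swap, div_inv_eq_mul, mul_comm]
  refine Asymptotics.isLittleO_iff.2 fun c hc => ?_
  have hκ : 0 < c * (1 - θ) / (1 + c) := div_pos (mul_pos hc (by linarith)) (by linarith)
  filter_upwards [eventually_forall_ge_atTop.2 (h _ hκ)] with t ht
  have hW := tailSup_le_sum_range_add he he0 t n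
  set W := ∑ j ∈ Finset.range n, e (t + j)
  set κ := c * (1 - θ) / (1 + c) with hκc
  have hW0 : 0 ≤ W := Finset.sum_nonneg fun j _ => he0 _
  have htail : tailSup e (t + n) ≤ κ * tailSup e t + θ * tailSup e (t + n) := by
    refine tailSup_le fun m hm => ?_
    obtain ⟨k, rfl⟩ := Nat.exists_eq_add_of_le hm
    rw [add_right_comm]
    refine (ht (t + k) (Nat.le_add_right t k)).trans ?_
    gcongr <;> exact tailSup_antitone he (by lia)
  have hκ' : (1 + c) * κ = (1 - θ) * c := by
    rw [hκc, mul_div_cancel₀ _ (by linarith), mul_comm]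
  have hT : (1 + c) * tailSup e (t + n) ≤ c * (W + tailSup e (t + n)) := by
    refine le_of_mul_le_mul_left ?_ (sub_pos.2 hθ)
    calc (1 - θ) * ((1 + c) * tailSup e (t + n))
        = (1 + c) * (tailSup e (t + n) - θ * tailSup e (t + n)) := by ring
      _ ≤ (1 + c) * (κ * (W + tailSup e (t + n))) := by
        gcongr
        linarith [mul_le_mul_of_nonneg_left hW hκ.le]
      _ = (1 - θ) * (c * (W + tailSup e (t + n))) := by rw [← mul_assoc, hκ', mul_assoc]
  rw [Real.norm_of_nonneg (he0 _), Real.norm_of_nonneg hW0]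
  linarith [le_tailSup he (le_refl (t + n))]

lemma tendsto_zero_of_succ_le_sub_add {U a b : ℕ → ℝ} (hU : ∀ t, 0 ≤ U t) (ha : ∀ t, 0 ≤ a t)
    (hb : Summable b) (h : ∀ t, U (t + 1) ≤ U t - a t + b t) : Tendsto a atTop (nhds 0) := by
  obtain ⟨C, hC⟩ := hb.hasSum.tendsto_sum_nat.bddAbove_range
  have hsum : ∀ t, ∑ s ∈ Finset.range t, a s ≤ U 0 - U t + ∑ s ∈ Finset.range t, b s := by
    intro t
    induction t with
    | zero => simp
    | succ t ih =>
      rw [Finset.sum_range_succ, Finset.sum_range_succ]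
      linarith [h t]
  refine (summable_of_sum_range_le (c := U 0 + C) ha fun t => ?_).tendsto_atTop_zero
  linarith [hsum t, hU t, hC (Set.mem_range_self t)]

end TailSup

section LinearApproximation

variable {E F : Type*} [NormedAddCommGroup E] [NormedSpace ℝ E] [NormedAddCommGroup F]
  [NormedSpace ℝ F]

/-- On the ball of radius `ρ` about `a`, the map `f` agrees with `f'` up to a Lipschitz error whose
constant is `L` times the distance to `a`: what a derivative that is `L`-Lipschitz at `a` provides,
and all that the convergence analysis uses of `f`. -/
def ApproximatesLinearNear (f : E → F) (f' : E →L[ℝ] F) (a : E) (L : ℝ≥0) (ρ : ℝ) : Prop :=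
  ∀ u ∈ Metric.closedBall a ρ, ∀ v ∈ Metric.closedBall a ρ,
    ‖f u - f v - f' (u - v)‖ ≤ L * max ‖u - a‖ ‖v - a‖ * ‖u - v‖

lemma approximatesLinearNear_of_hasFDerivAt {f : E → F} {f' : E → E →L[ℝ] F} {a : E} {L : ℝ≥0}
    {ρ : ℝ} (hf : ∀ u ∈ Metric.closedBall a ρ, HasFDerivAt f (f' u) u)
    (hL : ∀ u ∈ Metric.closedBall a ρ, ‖f' u - f' a‖ ≤ L * ‖u - a‖) :
    ApproximatesLinearNear f (f' a) a L ρ := by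
  intro u hu v hv
  set R := max ‖u - a‖ ‖v - a‖
  have hsub : Metric.closedBall a R ⊆ Metric.closedBall a ρ :=
    Metric.closedBall_subset_closedBall
      (max_le (mem_closedBall_iff_norm.1 hu) (mem_closedBall_iff_norm.1 hv))
  refine (convex_closedBall a R).norm_image_sub_le_of_norm_hasFDerivWithin_le'
    (fun w hw => (hf w (hsub hw)).hasFDerivWithinAt) (fun w hw => (hL w (hsub hw)).trans ?_)
    (mem_closedBall_iff_norm.2 (le_max_right _ _)) (mem_closedBall_iff_norm.2 (le_max_left _ _))
  gcongr
  exact mem_closedBall_iff_norm.1 hw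

lemma ApproximatesLinearNear.norm_sub_sub_le {f : E → F} {f' : E →L[ℝ] F} {a u v : E} {L : ℝ≥0}
    {ρ R : ℝ} (h : ApproximatesLinearNear f f' a L ρ) (hR : R ≤ ρ) (hu : ‖u - a‖ ≤ R)
    (hv : ‖v - a‖ ≤ R) : ‖f u - f v - f' (u - v)‖ ≤ L * R * ‖u - v‖ := by
  refine (h u (mem_closedBall_iff_norm.2 (hu.trans hR)) v
    (mem_closedBall_iff_norm.2 (hv.trans hR))).trans ?_
  gcongr
  exact max_le hu hv

end LinearApproximation

lemma card_mul_norm_le_of_forall_norm_sq_le {ι : Type*} [Fintype ι] {p : ℕ} {B : ι → Mat p}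
    {C : ℝ} {v : Vec p} (h : ∀ i, ‖v‖ ^ 2 ≤ C * ⟪v, applyM (B i) v⟫) (hC : 0 ≤ C) :
    Fintype.card ι * ‖v‖ ≤ C * ‖∑ i, applyM (B i) v‖ := by
  have hsum : Fintype.card ι * ‖v‖ ^ 2 ≤ C * ⟪v, ∑ i, applyM (B i) v⟫ := by
    rw [inner_sum, Finset.mul_sum, ← nsmul_eq_mul]
    exact Finset.card_nsmul_le_sum _ _ _ fun i _ => h i
  have hcs := mul_le_mul_of_nonneg_left (real_inner_le_norm v (∑ i, applyM (B i) v)) hC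
  rcases (norm_nonneg v).eq_or_lt with hv | hv
  · rw [← hv, mul_zero]
    positivity
  · exact le_of_mul_le_mul_right (by linarith) hv

lemma exists_lt_cyc_add_eq {n : ℕ} (hn : 1 ≤ n) (t : ℕ) (i : Fin n) :
    ∃ k < n, cyc hn (t + k) = i := by
  refine ⟨(i + (n - 1) * t) % n, Nat.mod_lt _ hn, Fin.ext ?_⟩
  change (t + (i + (n - 1) * t) % n) % n = i
  obtain ⟨m, rfl⟩ := Nat.exists_eq_add_of_le' hn
  rw [Nat.add_mod_mod, Nat.add_sub_cancel, show t + (i + m * t) = i + (m + 1) * t by ring,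
    Nat.add_mul_mod_self_left, Nat.mod_eq_of_lt i.2]

/-- The incremental quasi-Newton iteration for the equation `∑ i, g i = 0`. The equation `newton`
says that `x (t + 1)` is the zero of the sum of the current affine models of the `g i`, so that no
matrix inverse is needed. -/
structure IsIQNRun {p n : ℕ} (hn : 1 ≤ n) (g : Fin n → Vec p → Vec p) (x : ℕ → Vec p)
    (z : Fin n → ℕ → Vec p) (B : Fin n → ℕ → Mat p) : Prop where
  z_zero : ∀ i, z i 0 = x 0
  isSymm : ∀ i t, (B i t).IsSymm
  newton : ∀ t, ∑ i, (applyM (B i t) (x (t + 1) - z i t) + g i (z i t)) = 0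
  z_cyc : ∀ t, z (cyc hn t) (t + 1) = x (t + 1)
  z_of_ne : ∀ t j, j ≠ cyc hn t → z j (t + 1) = z j t
  step_ne_zero : ∀ t, x (t + 1) - z (cyc hn t) t ≠ 0
  B_cyc : ∀ t, B (cyc hn t) (t + 1) = bfgsUpdate (B (cyc hn t) t) (x (t + 1) - z (cyc hn t) t)
    (g (cyc hn t) (x (t + 1)) - g (cyc hn t) (z (cyc hn t) t))
  B_of_ne : ∀ t j, j ≠ cyc hn t → B j (t + 1) = B j t

/-- The relative error of `B (cyc hn t) t` as an approximation of the Hessian in the direction of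
the step taken at time `t`; the Dennis–Moré condition asks that it tend to zero. -/
def dennisMoreRatio {p n : ℕ} (hn : 1 ≤ n) (H : Fin n → Mat p) (x : ℕ → Vec p)
    (z : Fin n → ℕ → Vec p) (B : Fin n → ℕ → Mat p) (t : ℕ) : ℝ :=
  ‖applyM (B (cyc hn t) t - H (cyc hn t)) (x (t + 1) - z (cyc hn t) t)‖ /
    ‖x (t + 1) - z (cyc hn t) t‖

/-- The sum of the squared weighted distances from the matrices `B i t` to the `H i`; it is almost
nonincreasing along a local run. -/
def potential {p n : ℕ} (M H : Fin n → Mat p) (B : Fin n → ℕ → Mat p) (t : ℕ) : ℝ :=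
  ∑ i, wNorm (M i) (B i t - H i) ^ 2

section Potential

variable {p n : ℕ} {M H : Fin n → Mat p} {B : Fin n → ℕ → Mat p}

lemma potential_nonneg (t : ℕ) : 0 ≤ potential M H B t :=
  Finset.sum_nonneg fun _ _ => sq_nonneg _

lemma wNorm_le_of_potential_le {φ : ℝ} {t : ℕ} (hφ : 0 ≤ φ) (h : potential M H B t ≤ φ ^ 2)
    (i : Fin n) : wNorm (M i) (B i t - H i) ≤ φ := by
  have hle := (Finset.single_le_sum (fun j _ => sq_nonneg (wNorm (M j) (B j t - H j)))
    (Finset.mem_univ i)).trans h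
  exact (abs_le_of_sq_le_sq' hle hφ).2

end Potential

/-- Constants governing the local analysis: a run that starts within `ε` of the zero, with all
matrices within weighted distance `δ` of the `H i`, satisfies `‖x t - a‖ ≤ ε * r ^ t` and keeps the
potential below `φ ^ 2`. The bound on `r ^ n` makes up for `z i t` lagging at most `n` steps behind
`x t`. -/
structure LocalConstants (n : ℕ) (K : ℝ) (L : ℝ≥0) (ρ r φ δ ε : ℝ) : Prop where
  r_nonneg : 0 ≤ r
  r_lt_one : r < 1
  half_le_r_pow : 1 / 2 ≤ r ^ n
  φ_nonneg : 0 ≤ φ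
  φ_le_half : φ ≤ 1 / 2
  δ_pos : 0 < δ
  ε_pos : 0 < ε
  two_mul_ε_le : 2 * ε ≤ ρ
  contraction : 2 * K ^ 2 * (K ^ 2 * φ + L * (2 * ε)) ≤ 1 / 2
  potential_budget : n * δ ^ 2 + 64 * K ^ 2 * L * ε / (1 - r) ≤ φ ^ 2

lemma exists_lt_one_half_le_pow {n : ℕ} (hn : 1 ≤ n) :
    ∃ r : ℝ, 0 ≤ r ∧ r < 1 ∧ 1 / 2 ≤ r ^ n := by
  have hn1 : (1 : ℝ) ≤ n := by exact_mod_cast hn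
  set q : ℝ := 1 / (2 * n)
  have hq0 : 0 < q := by positivity
  have hq : q ≤ 1 / 2 := one_div_le_one_div_of_le two_pos (by linarith)
  refine ⟨1 - q, by linarith, by linarith, ?_⟩
  have hbern := one_add_mul_le_pow (a := -q) (by linarith) n
  rwa [show 1 + n * -q = 1 / 2 by simp only [q]; field_simp; norm_num, ← sub_eq_add_neg] at hbern

lemma exists_localConstants {n : ℕ} (hn : 1 ≤ n) {K ρ : ℝ} (hK : 1 ≤ K) (L : ℝ≥0) (hρ : 0 < ρ) :
    ∃ r φ δ ε, LocalConstants n K L ρ r φ δ ε := by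
  obtain ⟨r, hr0, hr1, hr⟩ := exists_lt_one_half_le_pow hn
  have hn1 : (1 : ℝ) ≤ n := by exact_mod_cast hn
  set φ : ℝ := 1 / (8 * K ^ 4)
  have hφ0 : 0 < φ := by positivity
  have hφ : φ ≤ 1 / 2 :=
    one_div_le_one_div_of_le two_pos (by linarith [one_le_pow₀ hK (n := 4)])
  have hφK : 2 * K ^ 2 * (K ^ 2 * φ) = 1 / 4 := by simp only [φ]; field_simp; norm_num
  have hδ : n * (φ / (2 * n)) ^ 2 ≤ φ ^ 2 / 2 := by
    calc n * (φ / (2 * n)) ^ 2 = φ ^ 2 / (4 * n) := by field_simp; norm_num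
      _ ≤ φ ^ 2 / 2 := by gcongr; linarith
  have hsmall : ∀ b : ℝ, ∀ c > 0, ∀ᶠ ε in nhdsWithin (0 : ℝ) (Set.Ioi 0), b * ε ≤ c := by
    intro b c hc
    have hlim : Tendsto (b * ·) (nhdsWithin 0 (Set.Ioi 0)) (nhds (b * 0)) :=
      (continuous_const_mul b).continuousWithinAt
    exact hlim.eventually_le_const (by simpa using hc)
  obtain ⟨ε, hερ, hεcontr, hεbudget, hε0⟩ :=
    ((hsmall 2 ρ hρ).and ((hsmall (4 * K ^ 2 * L) (1 / 4) (by norm_num)).and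
      ((hsmall (64 * K ^ 2 * L / (1 - r)) (φ ^ 2 / 2) (by positivity)).and
        self_mem_nhdsWithin))).exists
  refine ⟨r, φ, φ / (2 * n), ε, hr0, hr1, hr, hφ0.le, hφ, by positivity, hε0, hερ, by linarith, ?_⟩
  rw [mul_div_right_comm]
  linarith

lemma LocalConstants.add_geom_sum_le {n : ℕ} {K ρ r φ δ ε : ℝ} {L : ℝ≥0}
    (hc : LocalConstants n K L ρ r φ δ ε) (t : ℕ) :
    n * δ ^ 2 + 64 * K ^ 2 * L * ε * ∑ s ∈ Finset.range t, r ^ s ≤ φ ^ 2 := by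
  have hε := hc.ε_pos
  have hgeom : ∑ s ∈ Finset.range t, r ^ s ≤ 1 / (1 - r) := by
    simpa using geom_sum_Ico_le_of_lt_one (m := 0) (n := t) hc.r_nonneg hc.r_lt_one
  refine le_trans ?_ hc.potential_budget
  rw [div_eq_mul_one_div]
  gcongr

lemma LocalConstants.two_mul_sq_mul_le {n : ℕ} {K ρ r φ δ ε : ℝ} {L : ℝ≥0}
    (hc : LocalConstants n K L ρ r φ δ ε) : 2 * K ^ 2 * (K ^ 2 * φ) ≤ 1 / 2 := by
  have hε := hc.ε_pos
  refine le_trans ?_ hc.contraction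
  gcongr
  exact le_add_of_nonneg_right (by positivity)

namespace IsIQNRun

variable {p n : ℕ} {hn : 1 ≤ n} {g : Fin n → Vec p → Vec p} {x : ℕ → Vec p}
  {z : Fin n → ℕ → Vec p} {B : Fin n → ℕ → Mat p} {M H : Fin n → Mat p} {a : Vec p}
  {L : ℝ≥0} {K ρ r φ δ ε : ℝ}

lemma z_B_add_eq (h : IsIQNRun hn g x z B) {i : Fin n} {t k : ℕ}
    (hk : ∀ j < k, cyc hn (t + j) ≠ i) : z i (t + k) = z i t ∧ B i (t + k) = B i t := by
  induction k with
  | zero => exact ⟨rfl, rfl⟩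
  | succ k ih =>
    obtain ⟨hz, hB⟩ := ih fun j hj => hk j (hj.trans k.lt_succ_self)
    have hne := (hk k k.lt_succ_self).symm
    rw [← add_assoc, h.z_of_ne _ _ hne, h.B_of_ne _ _ hne]
    exact ⟨hz, hB⟩

lemma exists_next_update (h : IsIQNRun hn g x z B) (i : Fin n) (t : ℕ) :
    ∃ k < n, cyc hn (t + k) = i ∧ z i (t + k) = z i t ∧ B i (t + k) = B i t := by
  classical
  obtain ⟨k₀, hk₀, hcyc⟩ := exists_lt_cyc_add_eq hn t i
  have hex : ∃ k, cyc hn (t + k) = i := ⟨k₀, hcyc⟩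
  exact ⟨Nat.find hex, (Nat.find_min' hex hcyc).trans_lt hk₀, Nat.find_spec hex,
    h.z_B_add_eq fun j hj => Nat.find_min hex hj⟩

lemma exists_last_update (h : IsIQNRun hn g x z B) (i : Fin n) (t : ℕ) :
    ∃ m ≤ t, z i t = x m ∧ ∀ j, m ≤ j → j < t → cyc hn j ≠ i := by
  induction t with
  | zero => exact ⟨0, le_rfl, h.z_zero i, fun j _ hj => absurd hj j.not_lt_zero⟩
  | succ t ih =>
    by_cases hi : cyc hn t = i
    · exact ⟨t + 1, le_rfl, hi ▸ h.z_cyc t, fun j hj hjt => absurd hjt hj.not_gt⟩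
    · obtain ⟨m, hmt, hz, hne⟩ := ih
      refine ⟨m, hmt.trans t.le_succ, (h.z_of_ne t i (Ne.symm hi)).trans hz, fun j hmj hjt => ?_⟩
      rcases Nat.lt_succ_iff_lt_or_eq.1 hjt with hlt | rfl
      · exact hne j hmj hlt
      · exact hi

lemma exists_z_eq_x (h : IsIQNRun hn g x z B) (i : Fin n) (t : ℕ) :
    ∃ m ≤ t, t < m + n ∧ z i t = x m := by
  obtain ⟨m, hmt, hz, hne⟩ := h.exists_last_update i t
  obtain ⟨k, hk, hcyc⟩ := exists_lt_cyc_add_eq hn m i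
  refine ⟨m, hmt, ?_, hz⟩
  by_contra! hle
  exact hne (m + k) (Nat.le_add_right m k) (by omega) hcyc

section Local

lemma sum_applyM_sub_eq (h : IsIQNRun hn g x z B) (h0 : ∑ i, g i a = 0) (H : Fin n → Mat p)
    (t : ℕ) : ∑ i, applyM (B i t) (x (t + 1) - a) =
      ∑ i, (applyM (B i t - H i) (z i t - a) -
        (g i (z i t) - g i a - applyM (H i) (z i t - a))) := by
  have hsplit : ∀ i, applyM (B i t - H i) (z i t - a) -
      (g i (z i t) - g i a - applyM (H i) (z i t - a)) =
      applyM (B i t) (x (t + 1) - a) - (applyM (B i t) (x (t + 1) - z i t) + g i (z i t)) +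
        g i a := by
    intro i
    simp only [sub_applyM, applyM_sub]
    abel
  simp only [hsplit, Finset.sum_add_distrib (g := fun i => g i a), Finset.sum_sub_distrib,
    h.newton t, h0, sub_zero, add_zero]

lemma norm_x_succ_sub_le (h : IsIQNRun hn g x z B) (h0 : ∑ i, g i a = 0)
    (hg : ∀ i, ApproximatesLinearNear (g i) (toEuclideanCLM (𝕜 := ℝ) (H i)) a L ρ)
    (hW : ∀ i, IsBoundedInvSqrt (M i) (H i) K) {t : ℕ} {c : ℝ}
    (hV : ∀ i, wNorm (M i) (B i t - H i) ≤ 1 / 2) (hz : ∀ i, ‖z i t - a‖ ≤ ρ)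
    (hc : ∀ i, ‖applyM (B i t - H i) (z i t - a)‖ + L * ‖z i t - a‖ ^ 2 ≤ c) :
    ‖x (t + 1) - a‖ ≤ 2 * K ^ 2 * c := by
  have hn0 : (0 : ℝ) < n := by exact_mod_cast hn
  have hcoercive := card_mul_norm_le_of_forall_norm_sq_le (v := x (t + 1) - a)
    (fun i => (hW i).norm_sq_le_inner_applyM (hV i) (x (t + 1) - a)) (by positivity)
  have hterm : ∀ i, ‖applyM (B i t - H i) (z i t - a) -
      (g i (z i t) - g i a - applyM (H i) (z i t - a))‖ ≤ c := by
    intro i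
    have hrem : ‖g i (z i t) - g i a - applyM (H i) (z i t - a)‖ ≤ L * ‖z i t - a‖ ^ 2 := by
      rw [pow_two, ← mul_assoc]
      exact (hg i).norm_sub_sub_le (hz i) le_rfl (by simp)
    exact (norm_sub_le _ _).trans (by linarith [hc i])
  have hsum : ‖∑ i, applyM (B i t) (x (t + 1) - a)‖ ≤ n * c := by
    rw [h.sum_applyM_sub_eq h0 H]
    refine (norm_sum_le_of_le _ fun i _ => hterm i).trans_eq ?_
    simp
  rw [Fintype.card_fin] at hcoercive
  refine le_of_mul_le_mul_left (hcoercive.trans ?_) hn0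
  calc 2 * K ^ 2 * ‖∑ i, applyM (B i t) (x (t + 1) - a)‖ ≤ 2 * K ^ 2 * (n * c) := by gcongr
    _ = n * (2 * K ^ 2 * c) := by ring

lemma potential_succ_le (h : IsIQNRun hn g x z B)
    (hg : ∀ i, ApproximatesLinearNear (g i) (toEuclideanCLM (𝕜 := ℝ) (H i)) a L ρ)
    (hW : ∀ i, IsBoundedInvSqrt (M i) (H i) K) {t : ℕ} {R : ℝ} (hRρ : R ≤ ρ)
    (hR : K ^ 2 * (L * R) ≤ 1 / 2) (hV : ∀ i, wNorm (M i) (B i t - H i) ≤ 1 / 2)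
    (hz : ∀ i, ‖z i t - a‖ ≤ R) (hx : ‖x (t + 1) - a‖ ≤ R) :
    potential M H B (t + 1) ≤ potential M H B t
      - dennisMoreRatio hn H x z B t ^ 2 / (3 * K ^ 4) + 32 * (K ^ 2 * (L * R)) := by
  have hstep := (hW (cyc hn t)).wNorm_bfgsUpdate_sub_sq_le (h.isSymm _ t) (hV _)
    (h.step_ne_zero t) hR ((hg _).norm_sub_sub_le hRρ hx (hz _))
  rw [← h.B_cyc] at hstep
  have hrest : ∀ i ∈ Finset.univ.erase (cyc hn t),
      wNorm (M i) (B i (t + 1) - H i) ^ 2 = wNorm (M i) (B i t - H i) ^ 2 := fun i hi => by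
    rw [h.B_of_ne t i (Finset.ne_of_mem_erase hi)]
  rw [potential, potential, ← Finset.add_sum_erase _ _ (Finset.mem_univ (cyc hn t)),
    ← Finset.add_sum_erase Finset.univ (fun i => wNorm (M i) (B i t - H i) ^ 2)
      (Finset.mem_univ (cyc hn t)), Finset.sum_congr rfl hrest, dennisMoreRatio]
  linarith

end Local

section LinearConvergence

lemma norm_z_sub_le (h : IsIQNRun hn g x z B) (hc : LocalConstants n K L ρ r φ δ ε) {t : ℕ}
    (hx : ∀ s ≤ t, ‖x s - a‖ ≤ ε * r ^ s) (i : Fin n) : ‖z i t - a‖ ≤ 2 * ε * r ^ (t + 1) := by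
  obtain ⟨m, hmt, htm, hz⟩ := h.exists_z_eq_x i t
  have hr := hc.r_nonneg
  have hε := hc.ε_pos
  calc ‖z i t - a‖ ≤ ε * r ^ m := hz ▸ hx m hmt
    _ = 2 * ε * (r ^ m * (1 / 2)) := by ring
    _ ≤ 2 * ε * (r ^ m * r ^ n) := by gcongr; exact hc.half_le_r_pow
    _ = 2 * ε * r ^ (m + n) := by rw [pow_add]
    _ ≤ 2 * ε * r ^ (t + 1) := by
      gcongr 2 * ε * ?_
      exact pow_le_pow_of_le_one hr hc.r_lt_one.le htm

lemma norm_x_succ_sub_le_geometric (h : IsIQNRun hn g x z B) (h0 : ∑ i, g i a = 0)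
    (hg : ∀ i, ApproximatesLinearNear (g i) (toEuclideanCLM (𝕜 := ℝ) (H i)) a L ρ)
    (hW : ∀ i, IsBoundedInvSqrt (M i) (H i) K) (hc : LocalConstants n K L ρ r φ δ ε) {t : ℕ}
    (hV : potential M H B t ≤ φ ^ 2) (hx : ∀ s ≤ t, ‖x s - a‖ ≤ ε * r ^ s) :
    ‖x (t + 1) - a‖ ≤ ε * r ^ (t + 1) := by
  have hr := hc.r_nonneg
  have hε := hc.ε_pos
  have hφ := hc.φ_nonneg
  have hpow : r ^ (t + 1) ≤ 1 := pow_le_one₀ hr hc.r_lt_one.le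
  have hz := h.norm_z_sub_le hc hx
  have hVi := wNorm_le_of_potential_le hφ hV
  have hzε : ∀ i, ‖z i t - a‖ ≤ 2 * ε := fun i =>
    (hz i).trans (mul_le_of_le_one_right (by linarith) hpow)
  have hmodel : ∀ i, ‖applyM (B i t - H i) (z i t - a)‖ + L * ‖z i t - a‖ ^ 2 ≤
      (K ^ 2 * φ + L * (2 * ε)) * (2 * ε * r ^ (t + 1)) := by
    intro i
    calc ‖applyM (B i t - H i) (z i t - a)‖ + L * ‖z i t - a‖ ^ 2
        ≤ K ^ 2 * φ * ‖z i t - a‖ + L * ‖z i t - a‖ ^ 2 := by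
          gcongr
          exact (hW i).norm_applyM_sub_le (hVi i) _
      _ = (K ^ 2 * φ + L * ‖z i t - a‖) * ‖z i t - a‖ := by ring
      _ ≤ (K ^ 2 * φ + L * (2 * ε)) * (2 * ε * r ^ (t + 1)) := by
          gcongr
          exacts [hzε i, hz i]
  calc ‖x (t + 1) - a‖
      ≤ 2 * K ^ 2 * ((K ^ 2 * φ + L * (2 * ε)) * (2 * ε * r ^ (t + 1))) :=
        h.norm_x_succ_sub_le h0 hg hW (fun i => (hVi i).trans hc.φ_le_half)
          (fun i => (hzε i).trans hc.two_mul_ε_le) hmodel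
    _ = 2 * K ^ 2 * (K ^ 2 * φ + L * (2 * ε)) * (2 * ε * r ^ (t + 1)) := by ring
    _ ≤ 1 / 2 * (2 * ε * r ^ (t + 1)) := by gcongr; exact hc.contraction
    _ = ε * r ^ (t + 1) := by ring

lemma potential_succ_le_geometric (h : IsIQNRun hn g x z B)
    (hg : ∀ i, ApproximatesLinearNear (g i) (toEuclideanCLM (𝕜 := ℝ) (H i)) a L ρ)
    (hW : ∀ i, IsBoundedInvSqrt (M i) (H i) K) (hc : LocalConstants n K L ρ r φ δ ε) {t : ℕ}
    (hV : potential M H B t ≤ φ ^ 2) (hx : ∀ s ≤ t + 1, ‖x s - a‖ ≤ ε * r ^ s) :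
    potential M H B (t + 1) ≤ potential M H B t
      - dennisMoreRatio hn H x z B t ^ 2 / (3 * K ^ 4) + 64 * K ^ 2 * L * ε * r ^ t := by
  have hr := hc.r_nonneg
  have hε := hc.ε_pos
  have hφ := hc.φ_nonneg
  have hpow : r ^ (t + 1) ≤ r ^ t := pow_le_pow_of_le_one hr hc.r_lt_one.le t.le_succ
  have hR : 2 * ε * r ^ t ≤ 2 * ε :=
    mul_le_of_le_one_right (by linarith) (pow_le_one₀ hr hc.r_lt_one.le)
  have hLR : K ^ 2 * (L * (2 * ε * r ^ t)) ≤ 1 / 2 := by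
    have hcontr := hc.contraction
    have hle : K ^ 2 * (L * (2 * ε * r ^ t)) ≤ K ^ 2 * (L * (2 * ε)) := by gcongr
    have hKφ : 0 ≤ K ^ 2 * (K ^ 2 * φ) := by positivity
    linarith [(by positivity : 0 ≤ K ^ 2 * (L * (2 * ε)))]
  refine (h.potential_succ_le hg hW (hR.trans hc.two_mul_ε_le) hLR
    (fun i => (wNorm_le_of_potential_le hφ hV i).trans hc.φ_le_half)
    (fun i => ?_) ?_).trans_eq (by ring)
  · exact (h.norm_z_sub_le hc (fun s hs => hx s (hs.trans t.le_succ)) i).trans (by gcongr)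
  · refine (hx (t + 1) le_rfl).trans ?_
    gcongr
    linarith

lemma potential_zero_le (hB : ∀ i, wNorm (M i) (B i 0 - H i) ≤ δ) :
    potential M H B 0 ≤ n * δ ^ 2 := by
  have hterm : ∀ i, wNorm (M i) (B i 0 - H i) ^ 2 ≤ δ ^ 2 := fun i =>
    pow_le_pow_left₀ (Real.sqrt_nonneg _) (hB i) 2
  simpa [potential] using Finset.sum_le_card_nsmul Finset.univ _ _ fun i _ => hterm i

lemma norm_x_sub_le_and_potential_le (h : IsIQNRun hn g x z B) (h0 : ∑ i, g i a = 0)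
    (hg : ∀ i, ApproximatesLinearNear (g i) (toEuclideanCLM (𝕜 := ℝ) (H i)) a L ρ)
    (hW : ∀ i, IsBoundedInvSqrt (M i) (H i) K) (hc : LocalConstants n K L ρ r φ δ ε)
    (hx : ‖x 0 - a‖ ≤ ε) (hB : ∀ i, wNorm (M i) (B i 0 - H i) ≤ δ) (t : ℕ) :
    (∀ s ≤ t, ‖x s - a‖ ≤ ε * r ^ s) ∧
      potential M H B t ≤ n * δ ^ 2 + 64 * K ^ 2 * L * ε * ∑ s ∈ Finset.range t, r ^ s := by
  induction t with
  | zero =>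
    refine ⟨fun s hs => ?_, by simpa using potential_zero_le hB⟩
    rw [Nat.le_zero.1 hs, pow_zero, mul_one]
    exact hx
  | succ t ih =>
    obtain ⟨hxt, hVt⟩ := ih
    have hV : potential M H B t ≤ φ ^ 2 := hVt.trans (hc.add_geom_sum_le t)
    have hx' : ∀ s ≤ t + 1, ‖x s - a‖ ≤ ε * r ^ s := fun s hs =>
      (Nat.le_succ_iff.1 hs).elim (hxt s) fun hs =>
        hs ▸ h.norm_x_succ_sub_le_geometric h0 hg hW hc hV hxt
    refine ⟨hx', ?_⟩
    have hstep := h.potential_succ_le_geometric hg hW hc hV hx'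
    have hratio : 0 ≤ dennisMoreRatio hn H x z B t ^ 2 / (3 * K ^ 4) := by positivity
    rw [Finset.sum_range_succ]
    linarith

lemma norm_x_sub_le (h : IsIQNRun hn g x z B) (h0 : ∑ i, g i a = 0)
    (hg : ∀ i, ApproximatesLinearNear (g i) (toEuclideanCLM (𝕜 := ℝ) (H i)) a L ρ)
    (hW : ∀ i, IsBoundedInvSqrt (M i) (H i) K) (hc : LocalConstants n K L ρ r φ δ ε)
    (hx : ‖x 0 - a‖ ≤ ε) (hB : ∀ i, wNorm (M i) (B i 0 - H i) ≤ δ) (t : ℕ) :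
    ‖x t - a‖ ≤ ε * r ^ t :=
  (h.norm_x_sub_le_and_potential_le h0 hg hW hc hx hB t).1 t le_rfl

lemma potential_le (h : IsIQNRun hn g x z B) (h0 : ∑ i, g i a = 0)
    (hg : ∀ i, ApproximatesLinearNear (g i) (toEuclideanCLM (𝕜 := ℝ) (H i)) a L ρ)
    (hW : ∀ i, IsBoundedInvSqrt (M i) (H i) K) (hc : LocalConstants n K L ρ r φ δ ε)
    (hx : ‖x 0 - a‖ ≤ ε) (hB : ∀ i, wNorm (M i) (B i 0 - H i) ≤ δ) (t : ℕ) :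
    potential M H B t ≤ φ ^ 2 :=
  (h.norm_x_sub_le_and_potential_le h0 hg hW hc hx hB t).2.trans (hc.add_geom_sum_le t)

end LinearConvergence

section SuperlinearConvergence

lemma tendsto_dennisMoreRatio (h : IsIQNRun hn g x z B) (h0 : ∑ i, g i a = 0)
    (hg : ∀ i, ApproximatesLinearNear (g i) (toEuclideanCLM (𝕜 := ℝ) (H i)) a L ρ)
    (hW : ∀ i, IsBoundedInvSqrt (M i) (H i) K) (hK : 0 < K)
    (hc : LocalConstants n K L ρ r φ δ ε)
    (hx : ‖x 0 - a‖ ≤ ε) (hB : ∀ i, wNorm (M i) (B i 0 - H i) ≤ δ) :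
    Tendsto (dennisMoreRatio hn H x z B) atTop (nhds 0) := by
  have hsq := tendsto_zero_of_succ_le_sub_add (potential_nonneg (M := M) (H := H) (B := B))
    (a := fun t => dennisMoreRatio hn H x z B t ^ 2 / (3 * K ^ 4)) (fun t => by positivity)
    ((summable_geometric_of_lt_one hc.r_nonneg hc.r_lt_one).mul_left (64 * K ^ 2 * L * ε))
    fun t => h.potential_succ_le_geometric hg hW hc (h.potential_le h0 hg hW hc hx hB t)
      fun s _ => h.norm_x_sub_le h0 hg hW hc hx hB s
  have hmul := (hsq.mul_const (3 * K ^ 4)).sqrt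
  simp only [div_mul_cancel₀ _ (show 3 * K ^ 4 ≠ 0 by positivity), zero_mul, Real.sqrt_zero]
    at hmul
  exact hmul.congr fun t => Real.sqrt_sq (div_nonneg (norm_nonneg _) (norm_nonneg _))

lemma tendsto_norm_x_sub (h : IsIQNRun hn g x z B) (h0 : ∑ i, g i a = 0)
    (hg : ∀ i, ApproximatesLinearNear (g i) (toEuclideanCLM (𝕜 := ℝ) (H i)) a L ρ)
    (hW : ∀ i, IsBoundedInvSqrt (M i) (H i) K) (hc : LocalConstants n K L ρ r φ δ ε)
    (hx : ‖x 0 - a‖ ≤ ε) (hB : ∀ i, wNorm (M i) (B i 0 - H i) ≤ δ) :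
    Tendsto (fun t => ‖x t - a‖) atTop (nhds 0) := by
  have hgeom := (tendsto_pow_atTop_nhds_zero_of_lt_one hc.r_nonneg hc.r_lt_one).const_mul ε
  rw [mul_zero] at hgeom
  exact squeeze_zero (fun _ => norm_nonneg _) (h.norm_x_sub_le h0 hg hW hc hx hB) hgeom

/-- Between time `t` and the next update of index `i` neither `z i` nor `B i` moves, so the error of
`B i t` in the direction `z i t - a` splits into the error along that next step, which the
Dennis–Moré ratio controls, and the error along a later residual. -/
lemma norm_applyM_B_sub_le (h : IsIQNRun hn g x z B) (hW : ∀ i, IsBoundedInvSqrt (M i) (H i) K)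
    {t : ℕ} {κ c : ℝ} {i : Fin n} (hV : wNorm (M i) (B i t - H i) ≤ φ)
    (hratio : ∀ s ≥ t, dennisMoreRatio hn H x z B s ≤ κ) (hx : ∀ s > t, ‖x s - a‖ ≤ c) :
    ‖applyM (B i t - H i) (z i t - a)‖ ≤ κ * (c + ‖z i t - a‖) + K ^ 2 * φ * c := by
  obtain ⟨k, -, rfl, hz, hBk⟩ := h.exists_next_update i t
  have hr := hratio (t + k) (Nat.le_add_right t k)
  have hκ : 0 ≤ κ := hr.trans' (div_nonneg (norm_nonneg _) (norm_nonneg _))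
  have hφ : 0 ≤ φ := hV.trans' (Real.sqrt_nonneg _)
  have hxk := hx (t + k + 1) (by lia)
  rw [dennisMoreRatio, hz, hBk, div_le_iff₀ (norm_pos_iff.2 (hz ▸ h.step_ne_zero (t + k)))] at hr
  set i := cyc hn (t + k)
  have hsplit : z i t - a = (x (t + k + 1) - a) - (x (t + k + 1) - z i t) := by abel
  have hstep : ‖x (t + k + 1) - z i t‖ ≤ c + ‖z i t - a‖ := by
    rw [← sub_sub_sub_cancel_right _ _ a]
    exact (norm_sub_le _ _).trans (by gcongr)
  calc ‖applyM (B i t - H i) (z i t - a)‖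
      ≤ ‖applyM (B i t - H i) (x (t + k + 1) - a)‖
        + ‖applyM (B i t - H i) (x (t + k + 1) - z i t)‖ := by
        rw [hsplit, applyM_sub]
        exact norm_sub_le _ _
    _ ≤ K ^ 2 * φ * c + κ * (c + ‖z i t - a‖) := by
        gcongr
        · exact ((hW i).norm_applyM_sub_le hV _).trans (by gcongr)
        · exact hr.trans (by gcongr)
    _ = κ * (c + ‖z i t - a‖) + K ^ 2 * φ * c := add_comm _ _

lemma norm_x_succ_sub_le_tailSup (h : IsIQNRun hn g x z B) (h0 : ∑ i, g i a = 0)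
    (hg : ∀ i, ApproximatesLinearNear (g i) (toEuclideanCLM (𝕜 := ℝ) (H i)) a L ρ)
    (hW : ∀ i, IsBoundedInvSqrt (M i) (H i) K) (hφ : φ ≤ 1 / 2)
    (hV : ∀ i t, wNorm (M i) (B i t - H i) ≤ φ)
    (hbdd : BddAbove (Set.range fun t => ‖x t - a‖)) {s t : ℕ} (hst : s + 1 = t + n) {κ : ℝ}
    (hκρ : κ ≤ ρ) (hx : tailSup (fun t => ‖x t - a‖) t ≤ κ)
    (hratio : ∀ k ≥ t, dennisMoreRatio hn H x z B k ≤ κ) :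
    ‖x (s + 1) - a‖ ≤ 2 * K ^ 2 * ((2 + L) * κ * tailSup (fun t => ‖x t - a‖) t
      + K ^ 2 * φ * tailSup (fun t => ‖x t - a‖) (s + 1)) := by
  set e : ℕ → ℝ := fun t => ‖x t - a‖
  have hz : ∀ i, ‖z i s - a‖ ≤ tailSup e t := by
    intro i
    obtain ⟨m, -, hsm, hzm⟩ := h.exists_z_eq_x i s
    rw [hzm]
    exact le_tailSup hbdd (by lia)
  have hQ0 : 0 ≤ tailSup e t := tailSup_nonneg hbdd (fun _ => norm_nonneg _) t
  have hκ0 : 0 ≤ κ := hQ0.trans hx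
  have hAQ : tailSup e (s + 1) ≤ tailSup e t := tailSup_antitone hbdd (by lia)
  refine h.norm_x_succ_sub_le h0 hg hW (fun i => (hV i s).trans hφ)
    (fun i => (hz i).trans (hx.trans hκρ)) fun i => ?_
  have hmodel := h.norm_applyM_B_sub_le hW (hV i s) (fun k hk => hratio k (by lia))
    fun k hk => le_tailSup hbdd (Nat.succ_le_of_lt hk)
  calc ‖applyM (B i s - H i) (z i s - a)‖ + L * ‖z i s - a‖ ^ 2
      ≤ κ * (tailSup e (s + 1) + ‖z i s - a‖) + K ^ 2 * φ * tailSup e (s + 1)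
        + L * (‖z i s - a‖ * ‖z i s - a‖) := by
        rw [← pow_two]
        gcongr
    _ ≤ κ * (tailSup e t + tailSup e t) + K ^ 2 * φ * tailSup e (s + 1)
        + L * (κ * tailSup e t) := by
        gcongr
        exacts [hz i, (hz i).trans hx, hz i]
    _ = (2 + L) * κ * tailSup e t + K ^ 2 * φ * tailSup e (s + 1) := by ring

lemma tendsto_norm_x_sub_div_mean (h : IsIQNRun hn g x z B) (h0 : ∑ i, g i a = 0)
    (hg : ∀ i, ApproximatesLinearNear (g i) (toEuclideanCLM (𝕜 := ℝ) (H i)) a L ρ)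
    (hW : ∀ i, IsBoundedInvSqrt (M i) (H i) K) (hρ : 0 < ρ) (hK : 0 < K) (hφ : φ ≤ 1 / 2)
    (hKφ : 2 * K ^ 2 * (K ^ 2 * φ) ≤ 1 / 2) (hV : ∀ i t, wNorm (M i) (B i t - H i) ≤ φ)
    (hx : Tendsto (fun t => ‖x t - a‖) atTop (nhds 0))
    (hratio : Tendsto (dennisMoreRatio hn H x z B) atTop (nhds 0)) :
    Tendsto (fun t => ‖x (t + n) - a‖ /
      ((n : ℝ)⁻¹ * ∑ j ∈ Finset.range n, ‖x (t + j) - a‖)) atTop (nhds 0) := by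
  have hbdd := hx.bddAbove_range
  refine tendsto_div_mean_of_le_tailSup (θ := 1 / 2) hbdd (fun _ => norm_nonneg _) (by norm_num)
    (by norm_num) fun c hc => ?_
  set κ : ℝ := min ρ (c / (2 * K ^ 2 * (2 + L)))
  have hκ : 0 < κ := lt_min hρ (by positivity)
  have hκc : 2 * K ^ 2 * (2 + L) * κ ≤ c := by
    rw [mul_comm, ← le_div_iff₀ (by positivity)]
    exact min_le_right _ _
  filter_upwards [eventually_tailSup_le hx hκ,
    eventually_forall_ge_atTop.2 (hratio.eventually_le_const hκ)] with t hxt hratiot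
  obtain ⟨s, hs⟩ : ∃ s, s + 1 = t + n := ⟨t + n - 1, by lia⟩
  have hstep := h.norm_x_succ_sub_le_tailSup h0 hg hW hφ hV hbdd hs (min_le_left _ _) hxt hratiot
  rw [← hs]
  set Q := tailSup (fun t => ‖x t - a‖) t
  set A := tailSup (fun t => ‖x t - a‖) (s + 1)
  have hQ : 0 ≤ Q := tailSup_nonneg hbdd (fun _ => norm_nonneg _) _
  have hA : 0 ≤ A := tailSup_nonneg hbdd (fun _ => norm_nonneg _) _
  calc ‖x (s + 1) - a‖ ≤ 2 * K ^ 2 * (2 + L) * κ * Q + 2 * K ^ 2 * (K ^ 2 * φ) * A :=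
        hstep.trans_eq (by ring)
    _ ≤ c * Q + 1 / 2 * A := by gcongr

end SuperlinearConvergence

end IsIQNRun

lemma IQNProblem.approximatesLinearNear {p n : ℕ} (P : IQNProblem p n) (i : Fin n) (ρ : ℝ) :
    ApproximatesLinearNear (gradient (P.f i)) (toEuclideanCLM (𝕜 := ℝ) (P.Hess i P.xstar)) P.xstar
      ⟨P.Ltil, P.hLtil.le⟩ ρ :=
  approximatesLinearNear_of_hasFDerivAt (f' := fun u => toEuclideanCLM (𝕜 := ℝ) (P.Hess i u))
    (fun u _ => P.hHess i u) fun u _ => by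
      rw [← map_sub]
      exact P.hLip i u P.xstar

lemma IQNProblem.sum_gradient_xstar {p n : ℕ} (P : IQNProblem p n) :
    ∑ i, gradient (P.f i) P.xstar = 0 := by
  have hn : (n : ℝ)⁻¹ ≠ 0 := inv_ne_zero (Nat.cast_ne_zero.2 (Nat.one_le_iff_ne_zero.1 P.hn))
  have hfderiv : HasFDerivAt (fun x => (n : ℝ)⁻¹ * ∑ i, P.f i x)
      ((n : ℝ)⁻¹ • ∑ i, fderiv ℝ (P.f i) P.xstar) P.xstar :=
    (HasFDerivAt.fun_sum fun i _ =>
      ((P.hC2 i).differentiable two_ne_zero P.xstar).hasFDerivAt).const_mul _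
  have hopt := P.hopt
  rw [gradient, hfderiv.fderiv, map_smul, map_sum] at hopt
  exact (smul_eq_zero.1 hopt).resolve_left hn

lemma IQNState.isIQNRun {p n : ℕ} {P : IQNProblem p n} (S : IQNState P) :
    IsIQNRun P.hn (fun i => gradient (P.f i)) S.x S.z S.B where
  z_zero := S.hz0
  isSymm := S.hsym
  newton t := by
    have hn : (n : ℝ)⁻¹ ≠ 0 := inv_ne_zero (Nat.cast_ne_zero.2 (Nat.one_le_iff_ne_zero.1 P.hn))
    have hsolve := congrArg (applyM ((n : ℝ)⁻¹ • ∑ i, S.B i t)) (S.hx t)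
    rw [← applyM_mul, mul_nonsing_inv _ ((isUnit_iff_isUnit_det _).1 (S.hinv t)), applyM_one,
      smul_applyM, sum_applyM, ← smul_sub] at hsolve
    have hsum := smul_right_injective (Vec p) hn hsolve
    simp only [applyM_sub, Finset.sum_add_distrib, Finset.sum_sub_distrib, hsum]
    abel
  z_cyc := S.hzupd
  z_of_ne := S.hzfix
  step_ne_zero t := S.hzupd t ▸ S.hs t
  B_cyc t := S.hzupd t ▸ S.hBupd t
  B_of_ne := S.hBfix

theorem stmt8_general {p n : ℕ} (hn : 1 ≤ n) {g : Fin n → Vec p → Vec p} {H M : Fin n → Mat p}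
    {a : Vec p} {L : ℝ≥0} {ρ : ℝ} (hρ : 0 < ρ) (h0 : ∑ i, g i a = 0)
    (hg : ∀ i, ApproximatesLinearNear (g i) (toEuclideanCLM (𝕜 := ℝ) (H i)) a L ρ)
    (hM : ∀ i, (M i).IsSymm) (hMH : ∀ i, M i * H i * M i = 1) :
    ∃ ε > 0, ∃ δ > 0, ∀ x z B, IsIQNRun hn g x z B → ‖x 0 - a‖ < ε →
      (∀ i, wNorm (M i) (B i 0 - H i) < δ) →
      Tendsto (fun t => ‖x (t + n) - a‖ /
        ((n : ℝ)⁻¹ * ∑ j ∈ Finset.range n, ‖x (t + j) - a‖)) atTop (nhds 0) := by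
  obtain ⟨K, hK, hW⟩ := exists_isBoundedInvSqrt hM hMH
  obtain ⟨r, φ, δ, ε, hc⟩ := exists_localConstants hn hK L hρ
  refine ⟨ε, hc.ε_pos, δ, hc.δ_pos, fun x z B h hx hB => ?_⟩
  have hK0 : 0 < K := one_pos.trans_le hK
  have hB' : ∀ i, wNorm (M i) (B i 0 - H i) ≤ δ := fun i => (hB i).le
  have hV := h.potential_le h0 hg hW hc hx.le hB'
  exact h.tendsto_norm_x_sub_div_mean h0 hg hW hρ hK0 hc.φ_le_half hc.two_mul_sq_mul_le
    (fun i t => wNorm_le_of_potential_le hc.φ_nonneg (hV t) i)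
    (h.tendsto_norm_x_sub h0 hg hW hc hx.le hB')
    (h.tendsto_dennisMoreRatio h0 hg hW hK0 hc hx.le hB')

/-- Theorem 1 of the paper: locally, the IQN residuals are
mean-superlinearly convergent:
`‖x^t − x*‖ / [(1/n)(‖x^{t−1} − x*‖ + … + ‖x^{t−n} − x*‖)] → 0`
(the limit taken over `t ≥ n`; below `t` is shifted by `n`). -/
theorem stmt8 {p n : ℕ} (P : IQNProblem p n) (M : Fin n → Mat p)
    (hM : ∀ i, (M i).PosDef ∧ M i * P.Hess i P.xstar * M i = 1) :
    ∃ ε > (0:ℝ), ∃ δ > (0:ℝ), ∀ S : IQNState P,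
      (∀ t, S.x t ≠ P.xstar) →
      ‖S.x 0 - P.xstar‖ < ε →
      (∀ i, wNorm (M i) (S.B i 0 - P.Hess i P.xstar) < δ) →
      Tendsto (fun t : ℕ =>
          ‖S.x (t + n) - P.xstar‖ /
            ((n : ℝ)⁻¹ * ∑ j ∈ Finset.range n, ‖S.x (t + j) - P.xstar‖))
        atTop (nhds 0) := by
  obtain ⟨ε, hε, δ, hδ, h⟩ := stmt8_general P.hn one_pos P.sum_gradient_xstar
    (fun i => P.approximatesLinearNear i 1)
    (fun i => isHermitian_iff_isSymm.1 (hM i).1.isHermitian) fun i => (hM i).2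
  exact ⟨ε, hε, δ, hδ, fun S _ => h S.x S.z S.B S.isIQNRun⟩

end
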